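/- arXiv:1508.02909 — 2 statements merged into one kernel-verified Lean document; each statement's English description precedes it below -/
import Mathlib

section
/- Let η > 0, λ > 0, ρ > 0, P_u^{(m)} > 0 and a > 0, and set R_m = (P_u^{(m)}/ρ)^{1/η}. If R has density f_R(r) = 2πλ r exp(−πλ r²)/(1 − exp(−πλ R_m²)) on [0, R_m], then the a-th moment of the transmit power P_u = ρ R^η satisfies ∫₀^{R_m} (ρ r^η)^a f_R(r) dr = ρ^a · γ(aη/2 + 1, πλ R_m²) / ((πλ)^{aη/2} · (1 − exp(−πλ R_m²))), where γ(s, X) = ∫₀^X t^{s−1} e^{−t} dt is the lower incomplete gamma function. -/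
open Real MeasureTheory

/-- The lower incomplete gamma function `γ(s, X) = ∫₀^X t^{s−1} e^{−t} dt`. -/
noncomputable def lowerIncGamma (s X : ℝ) : ℝ :=
  ∫ t in (0:ℝ)..X, t ^ (s - 1) * Real.exp (-t)

/-- a-th moment of the uplink transmit power `P_u = ρ R^η` under the
truncated channel inversion power control distance density. -/
theorem stmt1 (η lam ρ Pm a : ℝ) (hη : 0 < η) (hlam : 0 < lam) (hρ : 0 < ρ)
    (hPm : 0 < Pm) (ha : 0 < a) (Rm : ℝ) (hRm : Rm = (Pm / ρ) ^ (1 / η)) :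
    (∫ r in (0:ℝ)..Rm,
        (ρ * r ^ η) ^ a *
          (2 * π * lam * r * Real.exp (-(π * lam * r ^ 2)) /
            (1 - Real.exp (-(π * lam * Rm ^ 2)))))
      = ρ ^ a * lowerIncGamma (a * η / 2 + 1) (π * lam * Rm ^ 2) /
          ((π * lam) ^ (a * η / 2) * (1 - Real.exp (-(π * lam * Rm ^ 2)))) := by
  have hRm0 : 0 ≤ Rm := by rw [hRm]; positivity
  have hc : 0 < π * lam := by positivity
  have hC : (π * lam) ^ (a * η / 2) ≠ 0 := (Real.rpow_pos_of_pos hc _).ne'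
  have hg : Continuous (fun t : ℝ => t ^ (a * η / 2 + 1 - 1) * Real.exp (-t)) := by
    refine Continuous.mul ?_ (by fun_prop)
    exact Real.continuous_rpow_const (by rw [add_sub_cancel_right]; positivity)
  have key := intervalIntegral.integral_comp_mul_deriv (a := 0) (b := Rm)
    (f := fun r : ℝ => π * lam * r ^ 2) (f' := fun r : ℝ => 2 * π * lam * r)
    (g := fun t : ℝ => t ^ (a * η / 2 + 1 - 1) * Real.exp (-t))
    (fun x _ => by
      have h := (hasDerivAt_pow 2 x).const_mul (π * lam)
      exact h.congr_deriv (by push_cast; ring))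
    (by fun_prop) hg
  have h0 : π * lam * (0:ℝ) ^ 2 = 0 := by ring
  simp only [h0] at key
  unfold lowerIncGamma
  rw [← key]
  generalize 1 - Real.exp (-(π * lam * Rm ^ 2)) = D
  have e : ρ ^ a * (∫ x in (0:ℝ)..Rm, ((fun t : ℝ => t ^ (a * η / 2 + 1 - 1) * Real.exp (-t)) ∘
      (fun r : ℝ => π * lam * r ^ 2)) x * (2 * π * lam * x)) / ((π * lam) ^ (a * η / 2) * D)
      = (ρ ^ a / ((π * lam) ^ (a * η / 2) * D)) * (∫ x in (0:ℝ)..Rm,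
        ((fun t : ℝ => t ^ (a * η / 2 + 1 - 1) * Real.exp (-t)) ∘
      (fun r : ℝ => π * lam * r ^ 2)) x * (2 * π * lam * x)) := by ring
  rw [e, ← intervalIntegral.integral_const_mul]
  refine intervalIntegral.integral_congr fun r hr => ?_
  rw [Set.uIcc_of_le hRm0] at hr
  have hr0 : 0 ≤ r := hr.1
  have h1 : (ρ * r ^ η) ^ a = ρ ^ a * r ^ (a * η) := by
    rw [Real.mul_rpow hρ.le (by positivity), ← Real.rpow_mul hr0, mul_comm η a]
  have h2 : (π * lam * r ^ 2) ^ (a * η / 2 + 1 - 1)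
      = (π * lam) ^ (a * η / 2) * r ^ (a * η) := by
    rw [add_sub_cancel_right, Real.mul_rpow hc.le (by positivity), ← Real.rpow_natCast r 2,
      ← Real.rpow_mul hr0]
    congr 2
    push_cast
    ring
  simp only [Function.comp, h1, h2]
  rw [div_mul_eq_div_div]
  generalize (π * lam) ^ (a * η / 2) = C at hC
  simp only [div_eq_mul_inv]
  have hCC : C⁻¹ * C = 1 := inv_mul_cancel₀ hC
  linear_combination (-(ρ ^ a * D⁻¹ * r ^ (a * η) * Real.exp (-(π * lam * r ^ 2)) *
    (2 * π * lam * r))) * hCC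
end

section
/- Let ω₁ ∈ ℝ, ω₂ > 0, b > 0, and let μ be a probability measure on [0, ∞) (the law of the nonnegative random interference Y). Then ∫_{[0,∞)} ∫₀^∞ ω₁ · erfc(√(ω₂ x/(y + b))) · e^{−x} dx dμ(y) = ω₁ − (ω₁/√π) · ∫₀^∞ z^{−1/2} · L_μ(z/ω₂) · exp(−z(1 + b/ω₂)) dz, where L_μ(s) = ∫_{[0,∞)} e^{−s y} dμ(y) is the Laplace transform of μ and erfc(t) = (2/√π) · ∫_t^∞ e^{−u²} du. -/
open Real MeasureTheory

/-- The complementary error function `erfc(t) = (2/√π)·∫_t^∞ e^{−u²} du`. -/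
noncomputable def erfc (t : ℝ) : ℝ :=
  (2 / Real.sqrt π) * ∫ u in Set.Ioi t, Real.exp (-u ^ 2)

lemma inner_erfc (k : ℝ) (hk : 0 < k) :
    (∫ x in Set.Ioi (0:ℝ), erfc (Real.sqrt (x / k)) * Real.exp (-x)) = 1 - √(1 / (1 + k)) := by
  set ν : Measure ℝ := volume.restrict (Set.Ioi 0) with hν
  have hg1 : Integrable (fun u : ℝ => Real.exp (-u ^ 2)) ν := by
    have := (integrable_exp_neg_mul_sq (b := 1) one_pos).restrict (s := Set.Ioi 0)
    simpa using this
  have hg2 : Integrable (fun u : ℝ => Real.exp (-(1 + k) * u ^ 2)) ν :=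
    (integrable_exp_neg_mul_sq (b := 1 + k) (by positivity)).restrict (s := Set.Ioi 0)
  have he : Integrable (fun x : ℝ => Real.exp (-x)) ν := integrableOn_exp_neg_Ioi 0
  let S : Set (ℝ × ℝ) := {p | Real.sqrt (p.1 / k) < p.2}
  have hS : MeasurableSet S := measurableSet_lt (by fun_prop) (by fun_prop)
  have hprod : Integrable (fun p : ℝ × ℝ => Real.exp (-p.1) * Real.exp (-p.2 ^ 2)) (ν.prod ν) :=
    he.mul_prod hg1
  have hind := hprod.indicator hS
  have swap := integral_integral_swap (μ := ν) (ν := ν)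
    (f := fun x u => S.indicator (fun p : ℝ × ℝ => Real.exp (-p.1) * Real.exp (-p.2 ^ 2)) (x, u))
    hind
  have hpi : 0 < √π := Real.sqrt_pos.mpr Real.pi_pos
  have hL : (∫ x in Set.Ioi (0:ℝ), erfc (Real.sqrt (x / k)) * Real.exp (-x))
      = (2 / √π) * ∫ x, ∫ u, S.indicator
        (fun p : ℝ × ℝ => Real.exp (-p.1) * Real.exp (-p.2 ^ 2)) (x, u) ∂ν ∂ν := by
    rw [← integral_const_mul]
    refine integral_congr_ae (Filter.Eventually.of_forall fun x => ?_)
    have : (fun u => S.indicator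
        (fun p : ℝ × ℝ => Real.exp (-p.1) * Real.exp (-p.2 ^ 2)) (x, u))
        = (Set.Ioi (√(x / k))).indicator (fun u => Real.exp (-x) * Real.exp (-u ^ 2)) := by
      funext u
      simp only [Set.indicator, S, Set.mem_ofPred_eq, Set.mem_Ioi]
    simp only [this]
    rw [integral_indicator measurableSet_Ioi, hν, Measure.restrict_restrict measurableSet_Ioi,
      Set.inter_eq_left.mpr (Set.Ioi_subset_Ioi (Real.sqrt_nonneg _)), integral_const_mul, erfc]
    ring
  have hR : (∫ u, ∫ x, S.indicator
        (fun p : ℝ × ℝ => Real.exp (-p.1) * Real.exp (-p.2 ^ 2)) (x, u) ∂ν ∂ν)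
      = ∫ u, (Real.exp (-u ^ 2) - Real.exp (-(1 + k) * u ^ 2)) ∂ν := by
    refine setIntegral_congr_fun measurableSet_Ioi fun u hu => ?_
    have hu : 0 < u := hu
    have : (fun x => S.indicator
        (fun p : ℝ × ℝ => Real.exp (-p.1) * Real.exp (-p.2 ^ 2)) (x, u))
        = (Set.Iio (k * u ^ 2)).indicator (fun x => Real.exp (-x) * Real.exp (-u ^ 2)) := by
      funext x
      have : √(x / k) < u ↔ x < k * u ^ 2 := by
        rw [Real.sqrt_lt' hu, div_lt_iff₀ hk, mul_comm]
      simp only [Set.indicator, S, Set.mem_ofPred_eq, Set.mem_Iio, this]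
    simp only [this]
    rw [integral_indicator measurableSet_Iio, hν, Measure.restrict_restrict measurableSet_Iio,
      Set.inter_comm, Set.Ioi_inter_Iio, integral_mul_const, ← integral_Ioc_eq_integral_Ioo,
      ← intervalIntegral.integral_of_le (by positivity),
      intervalIntegral.integral_comp_neg (fun x => Real.exp x), integral_exp, sub_mul, ← Real.exp_add,
      ← Real.exp_add]
    congr 2 <;> ring_nf
  rw [hL, swap, hR, integral_sub hg1 hg2, hν, integral_gaussian_Ioi]
  have := integral_gaussian_Ioi 1
  simp only [neg_mul, one_mul, div_one] at this
  rw [this, div_eq_mul_one_div π, Real.sqrt_mul Real.pi_pos.le]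
  field_simp

lemma inner_gamma (k : ℝ) (hk : 0 < k) :
    (∫ z in Set.Ioi (0:ℝ), z ^ (-(1/2) : ℝ) * Real.exp (-((1 + k) * z)))
      = √π * √(1 / (1 + k)) := by
  have := Real.integral_rpow_mul_exp_neg_mul_Ioi (a := 1/2) (r := 1 + k) (by norm_num)
    (by positivity)
  rw [Real.Gamma_one_half_eq, ← Real.sqrt_eq_rpow, mul_comm] at this
  rw [← this]
  norm_num

theorem stmt12 (ω₁ ω₂ b : ℝ) (hω : 0 < ω₂) (hb : 0 < b)
    (μ : Measure ℝ) [IsProbabilityMeasure μ] (hμ : μ (Set.Iio 0) = 0) :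
    (∫ y in Set.Ici (0:ℝ),
        (∫ x in Set.Ioi (0:ℝ),
          ω₁ * erfc (Real.sqrt (ω₂ * x / (y + b))) * Real.exp (-x)) ∂μ)
      = ω₁ - (ω₁ / Real.sqrt π) *
          ∫ z in Set.Ioi (0:ℝ),
            z ^ (-(1/2) : ℝ) *
              (∫ y in Set.Ici (0:ℝ), Real.exp (-(z / ω₂) * y) ∂μ) *
              Real.exp (-(z * (1 + b / ω₂))) := by
  have hpi : 0 < √π := Real.sqrt_pos.mpr Real.pi_pos
  have hae : ∀ᵐ y ∂μ, y ∈ Set.Ici (0:ℝ) := by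
    rw [ae_iff]
    convert hμ using 2
    ext y; simp
  rw [Measure.restrict_eq_self_of_ae_mem hae]
  set ν : Measure ℝ := volume.restrict (Set.Ioi 0) with hν
  have hc : 0 < 1 + b / ω₂ := by positivity
  have hdom : Integrable (fun z : ℝ => z ^ (-(1/2) : ℝ) * Real.exp (-(z * (1 + b / ω₂)))) ν := by
    have := integrableOn_rpow_mul_exp_neg_mul_rpow (p := 1) (s := -(1/2)) (b := 1 + b / ω₂)
      (by norm_num) (by norm_num) hc
    refine this.congr_fun (fun z _ => ?_) measurableSet_Ioi
    simp only [Real.rpow_one]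
    ring_nf
  have hint : Integrable (Function.uncurry fun z y : ℝ => z ^ (-(1/2) : ℝ) * Real.exp (-(z / ω₂) * y) *
      Real.exp (-(z * (1 + b / ω₂)))) (ν.prod μ) := by
    have h1 := hdom.mul_prod (integrable_const (1:ℝ) (μ := μ))
    refine h1.mono' (by unfold Function.uncurry; fun_prop) ?_
    have hz : ∀ᵐ p ∂(ν.prod μ), p.1 ∈ Set.Ioi (0:ℝ) :=
      Measure.quasiMeasurePreserving_fst.ae (ae_restrict_mem measurableSet_Ioi)
    have hy : ∀ᵐ p ∂(ν.prod μ), p.2 ∈ Set.Ici (0:ℝ) :=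
      Measure.quasiMeasurePreserving_snd.ae hae
    filter_upwards [hz, hy] with p hp1 hp2
    have hp1 : 0 < p.1 := hp1
    have hp2 : 0 ≤ p.2 := hp2
    simp only [Function.uncurry]
    rw [Real.norm_of_nonneg (by positivity), mul_one]
    have : Real.exp (-(p.1 / ω₂) * p.2) ≤ 1 := by
      rw [Real.exp_le_one_iff, neg_mul, neg_nonpos]; positivity
    refine mul_le_mul_of_nonneg_right ?_ (Real.exp_pos _).le
    exact mul_le_of_le_one_right (by positivity) this
  have swap := integral_integral_swap hint
  have hval : ∀ y : ℝ, 0 ≤ y → (∫ z, z ^ (-(1/2) : ℝ) * Real.exp (-(z / ω₂) * y) *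
      Real.exp (-(z * (1 + b / ω₂))) ∂ν) = √π * √(1 / (1 + (y + b) / ω₂)) := by
    intro y hy
    rw [← inner_gamma _ (by positivity)]
    congr 1
    funext z
    rw [mul_assoc, ← Real.exp_add]
    congr 2
    field_simp
    ring
  have hR : (∫ z, z ^ (-(1/2) : ℝ) * (∫ y, Real.exp (-(z / ω₂) * y) ∂μ) *
      Real.exp (-(z * (1 + b / ω₂))) ∂ν) = ∫ y, √π * √(1 / (1 + (y + b) / ω₂)) ∂μ := by
    simp_rw [← integral_const_mul, ← integral_mul_const]
    rw [swap]
    refine integral_congr_ae ?_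
    filter_upwards [hae] with y hy using hval y hy
  have hI : Integrable (fun y => √(1 / (1 + (y + b) / ω₂))) μ := by
    have h2 := hint.integral_prod_right
    refine (h2.const_mul (√π)⁻¹).congr ?_
    filter_upwards [hae] with y hy
    have := hval y hy
    simp only [Function.uncurry]
    rw [this]
    field_simp
  have hL : (∫ y, (∫ x, ω₁ * erfc (Real.sqrt (ω₂ * x / (y + b))) * Real.exp (-x) ∂ν) ∂μ)
      = ∫ y, ω₁ * (1 - √(1 / (1 + (y + b) / ω₂))) ∂μ := by
    refine integral_congr_ae ?_
    filter_upwards [hae] with y hy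
    have hy : 0 ≤ y := hy
    rw [← inner_erfc _ (by positivity), ← integral_const_mul]
    congr 1
    funext x
    rw [mul_assoc]
    congr 4
    field_simp
  rw [hL, hR, integral_const_mul, integral_const_mul, integral_sub (integrable_const _) hI]
  simp
  field_simp
end
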